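/- arXiv:2211.08792 — 6 statements merged into one kernel-verified Lean document; each statement's English description precedes it below -/
import Mathlib

section
/- Consider a 2×2 zero-sum game with payoff matrix entries u11, u12, u21, u22. If (p*, q*) ∈ [0,1]×[0,1] is a Nash equilibrium and either (p* ∈ {0,1} and q* ∈ (0,1)) or (p* ∈ (0,1) and q* ∈ {0,1}), then the set of Nash equilibria of the game is infinite. -/
/-- Expected payoff of the 2×2 zero-sum game with payoff matrix entries
`u11, u12, u21, u22`, when Player 1 plays its first action with probability `p`
and Player 2 plays its first action with probability `q`. -/
noncomputable def payoff (u11 u12 u21 u22 p q : ℝ) : ℝ :=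
  u11 * p * q + u12 * p * (1 - q) + u21 * (1 - p) * q + u22 * (1 - p) * (1 - q)

/-- `(p, q)` is a Nash equilibrium of the 2×2 zero-sum game. -/
def IsNE (u11 u12 u21 u22 p q : ℝ) : Prop :=
  p ∈ Set.Icc (0 : ℝ) 1 ∧ q ∈ Set.Icc (0 : ℝ) 1 ∧
    (∀ p' ∈ Set.Icc (0 : ℝ) 1, payoff u11 u12 u21 u22 p' q ≤ payoff u11 u12 u21 u22 p q) ∧
    (∀ q' ∈ Set.Icc (0 : ℝ) 1, payoff u11 u12 u21 u22 p q ≤ payoff u11 u12 u21 u22 p q')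

/-!
If Player 2 strictly mixes in an equilibrium `(p, q)`, then Player 2 is indifferent at `p`, so
`(p, q')` is an equilibrium as soon as `p` is a best response to `q'`. For pure `p` this says that
the affine function `q' ↦ payoff p q' - payoff (1 - p) q'` is nonnegative at `q'`; being
nonnegative at `q`, it is nonnegative at one of the endpoints `0`, `1`. Hence `(p, 0)` or `(p, 1)`
is an equilibrium too, and by convexity so is the whole segment joining it to `(p, q)`.
Exchanging the players turns a pure `q` into a pure `p`.
-/

open Set

section

variable {u11 u12 u21 u22 p q : ℝ}

lemma payoff_transpose_neg (u11 u12 u21 u22 p q : ℝ) :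
    payoff (-u11) (-u21) (-u12) (-u22) q p = -payoff u11 u12 u21 u22 p q := by
  unfold payoff
  ring

lemma payoff_convex_combination_right (u11 u12 u21 u22 p q₁ q₂ : ℝ) {a b : ℝ} (hab : a + b = 1) :
    payoff u11 u12 u21 u22 p (a * q₁ + b * q₂) =
      a * payoff u11 u12 u21 u22 p q₁ + b * payoff u11 u12 u21 u22 p q₂ := by
  obtain rfl : b = 1 - a := eq_sub_of_add_eq' hab
  unfold payoff
  ring

lemma payoff_eq_endpoints_right (u11 u12 u21 u22 p q : ℝ) :
    payoff u11 u12 u21 u22 p q =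
      q * payoff u11 u12 u21 u22 p 1 + (1 - q) * payoff u11 u12 u21 u22 p 0 := by
  simpa using payoff_convex_combination_right u11 u12 u21 u22 p 1 0 (add_sub_cancel q 1)

lemma payoff_eq_endpoints_left (u11 u12 u21 u22 p q : ℝ) :
    payoff u11 u12 u21 u22 p q =
      p * payoff u11 u12 u21 u22 1 q + (1 - p) * payoff u11 u12 u21 u22 0 q := by
  have h := payoff_eq_endpoints_right (-u11) (-u21) (-u12) (-u22) q p
  simp only [payoff_transpose_neg] at h
  linarith

lemma isNE_iff_isMaxOn_isMinOn :
    IsNE u11 u12 u21 u22 p q ↔ p ∈ Icc 0 1 ∧ q ∈ Icc 0 1 ∧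
      IsMaxOn (payoff u11 u12 u21 u22 · q) (Icc 0 1) p ∧
      IsMinOn (payoff u11 u12 u21 u22 p) (Icc 0 1) q :=
  Iff.rfl

lemma isNE_transpose_neg_iff :
    IsNE (-u11) (-u21) (-u12) (-u22) q p ↔ IsNE u11 u12 u21 u22 p q := by
  simp only [IsNE, payoff_transpose_neg, neg_le_neg_iff]
  tauto

lemma convex_setOf_isNE_right (u11 u12 u21 u22 p : ℝ) :
    Convex ℝ {q | IsNE u11 u12 u21 u22 p q} := by
  rintro q₁ ⟨hp, hq₁, hmax₁, hmin₁⟩ q₂ ⟨-, hq₂, hmax₂, hmin₂⟩ a b ha hb hab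
  refine ⟨hp, convex_Icc 0 1 hq₁ hq₂ ha hb hab, fun p' hp' => ?_, fun q' hq' => ?_⟩
  · simp only [smul_eq_mul, payoff_convex_combination_right _ _ _ _ _ _ _ hab]
    gcongr
    exacts [hmax₁ p' hp', hmax₂ p' hp']
  · calc payoff u11 u12 u21 u22 p (a * q₁ + b * q₂)
        = a * payoff u11 u12 u21 u22 p q₁ + b * payoff u11 u12 u21 u22 p q₂ :=
          payoff_convex_combination_right _ _ _ _ _ _ _ hab
      _ ≤ a * payoff u11 u12 u21 u22 p q' + b * payoff u11 u12 u21 u22 p q' := by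
          gcongr
          exacts [hmin₁ q' hq', hmin₂ q' hq']
      _ = payoff u11 u12 u21 u22 p q' := by rw [← add_mul, hab, one_mul]

lemma payoff_eq_of_isMinOn_of_mem_Ioo (hmin : IsMinOn (payoff u11 u12 u21 u22 p) (Icc 0 1) q)
    (hq : q ∈ Ioo 0 1) (q' : ℝ) :
    payoff u11 u12 u21 u22 p q' = payoff u11 u12 u21 u22 p q := by
  have h_zero := isMinOn_iff.1 hmin 0 (left_mem_Icc.2 zero_le_one)
  have h_one := isMinOn_iff.1 hmin 1 (right_mem_Icc.2 zero_le_one)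
  have h_avg := payoff_eq_endpoints_right u11 u12 u21 u22 p q
  have h_indifferent : payoff u11 u12 u21 u22 p 1 = payoff u11 u12 u21 u22 p 0 := by
    rw [h_avg] at h_zero h_one
    apply le_antisymm
    · exact le_of_mul_le_mul_left (by linarith) hq.1
    · exact le_of_mul_le_mul_left (by linarith) (sub_pos.2 hq.2)
  rw [payoff_eq_endpoints_right _ _ _ _ p q', h_avg, h_indifferent]
  ring

lemma isMaxOn_payoff_iff_of_pure (hp : p ∈ ({0, 1} : Set ℝ)) :
    IsMaxOn (payoff u11 u12 u21 u22 · q) (Icc 0 1) p ↔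
      payoff u11 u12 u21 u22 (1 - p) q ≤ payoff u11 u12 u21 u22 p q := by
  rw [isMaxOn_iff]
  obtain rfl | rfl := hp
  · refine ⟨fun h => h _ (by norm_num), fun h p' hp' => ?_⟩
    rw [sub_zero] at h
    rw [payoff_eq_endpoints_left]
    linarith [mul_le_mul_of_nonneg_left h hp'.1]
  · refine ⟨fun h => h _ (by norm_num), fun h p' hp' => ?_⟩
    rw [sub_self] at h
    rw [payoff_eq_endpoints_left]
    linarith [mul_le_mul_of_nonneg_left h (sub_nonneg.2 hp'.2)]

lemma exists_pure_isMaxOn_payoff (hp : p ∈ ({0, 1} : Set ℝ)) (hq : q ∈ Icc 0 1)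
    (hmax : IsMaxOn (payoff u11 u12 u21 u22 · q) (Icc 0 1) p) :
    ∃ e ∈ ({0, 1} : Set ℝ), IsMaxOn (payoff u11 u12 u21 u22 · e) (Icc 0 1) p := by
  simp only [isMaxOn_payoff_iff_of_pure hp] at hmax ⊢
  by_contra! h
  have h_zero := sub_pos.2 (h 0 (by simp))
  have h_one := sub_pos.2 (h 1 (by simp))
  have h_avg := convex_Ioi (0 : ℝ) h_one h_zero hq.1 (sub_nonneg.2 hq.2) (add_sub_cancel q 1)
  simp only [smul_eq_mul, mem_Ioi] at h_avg
  rw [payoff_eq_endpoints_right _ _ _ _ p, payoff_eq_endpoints_right _ _ _ _ (1 - p)] at hmax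
  linarith

lemma IsNE.exists_pure_right (hNE : IsNE u11 u12 u21 u22 p q) (hp : p ∈ ({0, 1} : Set ℝ))
    (hq : q ∈ Ioo 0 1) : ∃ e ∈ ({0, 1} : Set ℝ), IsNE u11 u12 u21 u22 p e := by
  obtain ⟨hpI, hqI, hmax, hmin⟩ := isNE_iff_isMaxOn_isMinOn.1 hNE
  obtain ⟨e, he, hmax_e⟩ := exists_pure_isMaxOn_payoff hp hqI hmax
  have heI : e ∈ Icc (0 : ℝ) 1 := by obtain rfl | rfl := he <;> simp
  have h_indifferent := payoff_eq_of_isMinOn_of_mem_Ioo hmin hq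
  refine ⟨e, he, hpI, heI, hmax_e, fun q' _ => ?_⟩
  rw [h_indifferent e, h_indifferent q']

lemma IsNE.infinite_setOf_right (hNE : IsNE u11 u12 u21 u22 p q) (hp : p ∈ ({0, 1} : Set ℝ))
    (hq : q ∈ Ioo 0 1) : {q' | IsNE u11 u12 u21 u22 p q'}.Infinite := by
  obtain ⟨e, he, hNE_e⟩ := hNE.exists_pure_right hp hq
  have hqe : q ≠ e := by
    obtain rfl | rfl := he
    exacts [hq.1.ne', hq.2.ne]
  exact (convex_setOf_isNE_right u11 u12 u21 u22 p).isPreconnected.infinite_of_nontrivial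
    ⟨q, hNE, e, hNE_e, hqe⟩

lemma IsNE.infinite_setOf_left (hNE : IsNE u11 u12 u21 u22 p q) (hp : p ∈ Ioo 0 1)
    (hq : q ∈ ({0, 1} : Set ℝ)) : {p' | IsNE u11 u12 u21 u22 p' q}.Infinite := by
  simpa only [isNE_transpose_neg_iff] using
    (isNE_transpose_neg_iff.2 hNE).infinite_setOf_right hq hp

end

theorem stmt0 (u11 u12 u21 u22 p q : ℝ)
    (hNE : IsNE u11 u12 u21 u22 p q)
    (h : (p ∈ ({0, 1} : Set ℝ) ∧ q ∈ Set.Ioo (0 : ℝ) 1) ∨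
         (p ∈ Set.Ioo (0 : ℝ) 1 ∧ q ∈ ({0, 1} : Set ℝ))) :
    Set.Infinite {pq : ℝ × ℝ | IsNE u11 u12 u21 u22 pq.1 pq.2} := by
  obtain ⟨hp, hq⟩ | ⟨hp, hq⟩ := h
  · have h_fiber := hNE.infinite_setOf_right hp hq
    exact (h_fiber.image (Prod.mk_right_injective p).injOn).mono (image_subset_iff.2 fun _ => id)
  · have h_fiber := hNE.infinite_setOf_left hp hq
    exact (h_fiber.image (Prod.mk_left_injective q).injOn).mono (image_subset_iff.2 fun _ => id)
end

section
/- Consider a 2×2 zero-sum game with payoff matrix entries u11, u12, u21, u22, and let S ⊆ [0,1]×[0,1] be its set of Nash equilibria. Assume S is finite. Then: (1) if S contains a pair (p*, q*) with p* ∈ {0,1} and q* ∈ {0,1}, then S contains no pair (p, q) with p ∈ (0,1) and q ∈ (0,1); and (2) if S contains a pair (p*, q*) with p* ∈ (0,1) and q* ∈ (0,1), then S contains no pair (p, q) with p ∈ {0,1} and q ∈ {0,1}. -/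
/-!
A Nash equilibrium of a zero-sum game is a saddle point of the payoff. All saddle points share one
value, so they form a product of two intersections of level sets, which is convex when each
player's payoff is quasiconcave in her own strategy. A convex set with two points contains a
segment, hence is uncountable; finitely many equilibria therefore means at most one, and it cannot
be both pure and strictly mixed.
-/

open Set

section SaddlePoint

variable {𝕜 E F β : Type*}

/-- The set of saddle points of `f` that lie in `X ×ˢ Y`; Mathlib's `IsSaddlePointOn` does not
require this membership. The first coordinate is the minimizing one. -/
def saddlePointSet [Preorder β] (X : Set E) (Y : Set F) (f : E → F → β) : Set (E × F) :=
  {z ∈ X ×ˢ Y | IsSaddlePointOn X Y f z.1 z.2}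

theorem mk_mem_saddlePointSet_iff [Preorder β] {X : Set E} {Y : Set F} {f : E → F → β}
    {x : E} {y : F} :
    (x, y) ∈ saddlePointSet X Y f ↔
      x ∈ X ∧ y ∈ Y ∧ (∀ x' ∈ X, f x y ≤ f x' y) ∧ ∀ y' ∈ Y, f x y' ≤ f x y := by
  constructor
  · rintro ⟨⟨hx, hy⟩, h⟩
    exact ⟨hx, hy, fun x' hx' ↦ h x' hx' y hy, fun y' hy' ↦ h x hx y' hy'⟩
  · rintro ⟨hx, hy, hmin, hmax⟩
    exact ⟨⟨hx, hy⟩, fun x' hx' y' hy' ↦ (hmax y' hy').trans (hmin x' hx')⟩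

theorem saddlePointSet_eq_prod [Preorder β] {X : Set E} {Y : Set F} {f : E → F → β} {a : E} {b : F}
    (h : (a, b) ∈ saddlePointSet X Y f) :
    saddlePointSet X Y f =
      (⋂ y ∈ Y, {x ∈ X | f x y ≤ f a b}) ×ˢ ⋂ x ∈ X, {y ∈ Y | f a b ≤ f x y} := by
  obtain ⟨⟨ha, hb⟩, hab⟩ := h
  ext ⟨x, y⟩
  simp only [mem_prod, mem_iInter₂]
  constructor
  · rintro ⟨⟨hx, hy⟩, hxy⟩
    exact ⟨fun y' hy' ↦ ⟨hx, (hxy a ha y' hy').trans (hab a ha y hy)⟩,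
      fun x' hx' ↦ ⟨hy, (hab x hx b hb).trans (hxy x' hx' b hb)⟩⟩
  · rintro ⟨hx, hy⟩
    exact ⟨⟨(hx b hb).1, (hy a ha).1⟩, fun x' hx' y' hy' ↦ (hx y' hy').2.trans (hy x' hx').2⟩

theorem convex_saddlePointSet [Semiring 𝕜] [PartialOrder 𝕜] [AddCommMonoid E] [AddCommMonoid F]
    [SMul 𝕜 E] [SMul 𝕜 F] [Preorder β] {X : Set E} {Y : Set F} {f : E → F → β}
    (hfX : ∀ y ∈ Y, QuasiconvexOn 𝕜 X fun x ↦ f x y) (hfY : ∀ x ∈ X, QuasiconcaveOn 𝕜 Y (f x)) :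
    Convex 𝕜 (saddlePointSet X Y f) := by
  obtain hempty | ⟨⟨a, b⟩, hab⟩ := (saddlePointSet X Y f).eq_empty_or_nonempty
  · rw [hempty]
    exact convex_empty
  · rw [saddlePointSet_eq_prod hab]
    exact (convex_iInter₂ fun y hy ↦ hfX y hy _).prod (convex_iInter₂ fun x hx ↦ hfY x hx _)

theorem subsingleton_of_convex_of_countable [AddCommGroup E] [Module ℝ E] {s : Set E}
    (hs : Convex ℝ s) (hcount : s.Countable) : s.Subsingleton := by
  intro x hx y hy
  by_contra hxy
  have hIcc : (Icc (0 : ℝ) 1).Countable :=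
    (hcount.preimage (AffineMap.lineMap_injective ℝ hxy)).mono fun _ ht ↦ hs.lineMap_mem hx hy ht
  exact zero_lt_one.not_ge (Cardinal.Real.Icc_countable_iff.mp hIcc)

end SaddlePoint

section Payoff

variable (u11 u12 u21 u22 : ℝ)

-- Player 1 maximizes `payoff`, so she is the minimizing player for `-payoff`.
theorem setOf_isNE_eq_saddlePointSet :
    {pq : ℝ × ℝ | IsNE u11 u12 u21 u22 pq.1 pq.2} =
      saddlePointSet (Icc 0 1) (Icc 0 1) fun p q ↦ -payoff u11 u12 u21 u22 p q := by
  ext ⟨p, q⟩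
  simp only [mem_ofPred_eq, IsNE, mk_mem_saddlePointSet_iff, neg_le_neg_iff]

variable {u11 u12 u21 u22}

theorem payoff_convexCombo_left {a b : ℝ} (hab : a + b = 1) (p p' q : ℝ) :
    payoff u11 u12 u21 u22 (a * p + b * p') q =
      a * payoff u11 u12 u21 u22 p q + b * payoff u11 u12 u21 u22 p' q := by
  obtain rfl : b = 1 - a := eq_sub_of_add_eq' hab
  unfold payoff
  ring

theorem payoff_convexCombo_right {a b : ℝ} (hab : a + b = 1) (p q q' : ℝ) :
    payoff u11 u12 u21 u22 p (a * q + b * q') =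
      a * payoff u11 u12 u21 u22 p q + b * payoff u11 u12 u21 u22 p q' := by
  obtain rfl : b = 1 - a := eq_sub_of_add_eq' hab
  unfold payoff
  ring

theorem concaveOn_payoff_left {s : Set ℝ} (hs : Convex ℝ s) (q : ℝ) :
    ConcaveOn ℝ s fun p ↦ payoff u11 u12 u21 u22 p q :=
  ⟨hs, fun p _ p' _ _ _ _ _ hab ↦ (payoff_convexCombo_left hab p p' q).ge⟩

theorem convexOn_payoff_right {s : Set ℝ} (hs : Convex ℝ s) (p : ℝ) :
    ConvexOn ℝ s (payoff u11 u12 u21 u22 p) :=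
  ⟨hs, fun q _ q' _ _ _ _ _ hab ↦ (payoff_convexCombo_right hab p q q').le⟩

end Payoff

theorem stmt1_general (u11 u12 u21 u22 : ℝ)
    (hcount : Set.Countable {pq : ℝ × ℝ | IsNE u11 u12 u21 u22 pq.1 pq.2}) :
    Set.Subsingleton {pq : ℝ × ℝ | IsNE u11 u12 u21 u22 pq.1 pq.2} := by
  refine subsingleton_of_convex_of_countable ?_ hcount
  rw [setOf_isNE_eq_saddlePointSet]
  exact convex_saddlePointSet
    (fun q _ ↦ (concaveOn_payoff_left (convex_Icc 0 1) q).neg.quasiconvexOn)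
    (fun p _ ↦ (convexOn_payoff_right (convex_Icc 0 1) p).neg.quasiconcaveOn)

theorem stmt1 (u11 u12 u21 u22 : ℝ)
    (hfin : Set.Finite {pq : ℝ × ℝ | IsNE u11 u12 u21 u22 pq.1 pq.2}) :
    ((∃ p q : ℝ, IsNE u11 u12 u21 u22 p q ∧ p ∈ ({0, 1} : Set ℝ) ∧ q ∈ ({0, 1} : Set ℝ)) →
      ∀ p q : ℝ, p ∈ Set.Ioo (0 : ℝ) 1 → q ∈ Set.Ioo (0 : ℝ) 1 →
        ¬ IsNE u11 u12 u21 u22 p q) ∧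
    ((∃ p q : ℝ, IsNE u11 u12 u21 u22 p q ∧ p ∈ Set.Ioo (0 : ℝ) 1 ∧ q ∈ Set.Ioo (0 : ℝ) 1) →
      ∀ p q : ℝ, p ∈ ({0, 1} : Set ℝ) → q ∈ ({0, 1} : Set ℝ) →
        ¬ IsNE u11 u12 u21 u22 p q) := by
  have hS := stmt1_general u11 u12 u21 u22 hfin.countable
  constructor <;> rintro ⟨a, b, hab, ha, -⟩ p q hp - hpq
  all_goals
    have hap : a = p := congrArg Prod.fst (@hS (a, b) hab (p, q) hpq)
    grind
end

section
/- Consider a 2×2 zero-sum game with payoff matrix entries u11, u12, u21, u22, and let S ⊆ [0,1]×[0,1] be its set of Nash equilibria. If S is finite and S contains a pair (p*, q*) with p* ∈ {0,1} and q* ∈ {0,1}, then S = {(p*, q*)}, i.e., (p*, q*) is the unique Nash equilibrium of the game. -/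
/-!
Nash equilibria are the saddle points of the payoff. Once one saddle point is known, with value `v`,
the others are the pairs of a strategy guaranteeing `v` to Player 1 and one guaranteeing `v` to
Player 2. These guarantees are systems of inequalities that are affine in the strategy, so the set
of equilibria is convex; a countable convex set is totally disconnected and connected at once, hence
has at most one point.
-/

open Set OrderDual

section SaddlePoint

variable {E F β : Type*} [Preorder β] {X : Set E} {Y : Set F} {f : E → F → β}

lemma isSaddlePointOn_iff_forall_le {a : E} {b : F} (ha : a ∈ X) (hb : b ∈ Y) :
    IsSaddlePointOn X Y f a b ↔ (∀ y ∈ Y, f a y ≤ f a b) ∧ ∀ x ∈ X, f a b ≤ f x b :=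
  ⟨fun h ↦ ⟨h a ha, fun x hx ↦ h x hx b hb⟩,
    fun ⟨hY, hX⟩ x hx y hy ↦ (hY y hy).trans (hX x hx)⟩

lemma setOf_isSaddlePointOn_eq_prod {a : E} {b : F} (ha : a ∈ X) (hb : b ∈ Y)
    (h : IsSaddlePointOn X Y f a b) :
    {z ∈ X ×ˢ Y | IsSaddlePointOn X Y f z.1 z.2} =
      {x ∈ X | ∀ y ∈ Y, f x y ≤ f a b} ×ˢ {y ∈ Y | ∀ x ∈ X, f a b ≤ f x y} := by
  ext ⟨x, y⟩
  constructor
  · rintro ⟨⟨hx, hy⟩, hxy⟩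
    exact ⟨⟨hx, fun y' hy' ↦ (hxy a ha y' hy').trans (h a ha y hy)⟩,
      ⟨hy, fun x' hx' ↦ (h x hx b hb).trans (hxy x' hx' b hb)⟩⟩
  · rintro ⟨⟨hx, hle⟩, ⟨hy, hge⟩⟩
    exact ⟨⟨hx, hy⟩, fun x' hx' y' hy' ↦ (hle y' hy').trans (hge x' hx')⟩

variable {𝕜 : Type*} [Semiring 𝕜] [PartialOrder 𝕜] [AddCommMonoid E] [SMul 𝕜 E]

lemma convex_setOf_forall_le (hY : Y.Nonempty) (hf : ∀ y ∈ Y, QuasiconvexOn 𝕜 X (f · y)) (r : β) :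
    Convex 𝕜 {x ∈ X | ∀ y ∈ Y, f x y ≤ r} := by
  have eq_iInter : {x ∈ X | ∀ y ∈ Y, f x y ≤ r} = ⋂ y ∈ Y, {x ∈ X | f x y ≤ r} := by
    ext x
    obtain ⟨b, hb⟩ := hY
    simp only [mem_iInter, mem_ofPred_eq]
    exact ⟨fun h y hy ↦ ⟨h.1, h.2 y hy⟩, fun h ↦ ⟨(h b hb).1, fun y hy ↦ (h y hy).2⟩⟩
  rw [eq_iInter]
  exact convex_iInter₂ fun y hy ↦ hf y hy r

theorem convex_setOf_isSaddlePointOn [AddCommMonoid F] [SMul 𝕜 F]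
    (hX : ∀ y ∈ Y, QuasiconvexOn 𝕜 X (f · y)) (hY : ∀ x ∈ X, QuasiconcaveOn 𝕜 Y (f x)) :
    Convex 𝕜 {z ∈ X ×ˢ Y | IsSaddlePointOn X Y f z.1 z.2} := by
  rcases eq_empty_or_nonempty {z ∈ X ×ˢ Y | IsSaddlePointOn X Y f z.1 z.2} with
    hempty | ⟨⟨a, b⟩, ⟨ha, hb⟩, hab⟩
  · rw [hempty]
    exact convex_empty
  · rw [setOf_isSaddlePointOn_eq_prod ha hb hab]
    exact (convex_setOf_forall_le ⟨b, hb⟩ hX _).prod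
      (convex_setOf_forall_le (β := βᵒᵈ) (f := fun y x ↦ toDual (f x y)) ⟨a, ha⟩
        (fun x hx ↦ (hY x hx).dual) _)

end SaddlePoint

lemma quasilinearOn_affineMap {𝕜 E β : Type*} [Ring 𝕜] [PartialOrder 𝕜] [AddCommGroup E]
    [Module 𝕜 E] [AddCommGroup β] [PartialOrder β] [IsOrderedAddMonoid β] [Module 𝕜 β]
    [PosSMulMono 𝕜 β] {s : Set E} (hs : Convex 𝕜 s) (g : E →ᵃ[𝕜] β) : QuasilinearOn 𝕜 s g :=
  ⟨hs.quasiconvexOn_of_convex_le fun r ↦ (convex_Iic r).affine_preimage g,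
    hs.quasiconcaveOn_of_convex_ge fun r ↦ (convex_Ici r).affine_preimage g⟩

section Payoff

variable (u11 u12 u21 u22 : ℝ)

lemma payoff_eq_lineMap_left (p q : ℝ) :
    payoff u11 u12 u21 u22 p q =
      AffineMap.lineMap (payoff u11 u12 u21 u22 0 q) (payoff u11 u12 u21 u22 1 q) p := by
  simp only [payoff, AffineMap.lineMap_apply_ring']
  ring

lemma payoff_eq_lineMap_right (p q : ℝ) :
    payoff u11 u12 u21 u22 p q =
      AffineMap.lineMap (payoff u11 u12 u21 u22 p 0) (payoff u11 u12 u21 u22 p 1) q := by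
  simp only [payoff, AffineMap.lineMap_apply_ring']
  ring

lemma quasilinearOn_payoff_left {s : Set ℝ} (hs : Convex ℝ s) (q : ℝ) :
    QuasilinearOn ℝ s (payoff u11 u12 u21 u22 · q) := by
  rw [funext (payoff_eq_lineMap_left u11 u12 u21 u22 · q)]
  exact quasilinearOn_affineMap hs _

lemma quasilinearOn_payoff_right {s : Set ℝ} (hs : Convex ℝ s) (p : ℝ) :
    QuasilinearOn ℝ s (payoff u11 u12 u21 u22 p) := by
  rw [funext (payoff_eq_lineMap_right u11 u12 u21 u22 p)]
  exact quasilinearOn_affineMap hs _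

-- `IsSaddlePointOn` minimizes over the first variable, whereas Player 1 maximizes: hence `toDual`.
lemma setOf_isNE_eq_setOf_isSaddlePointOn :
    {pq : ℝ × ℝ | IsNE u11 u12 u21 u22 pq.1 pq.2} =
      {pq ∈ Icc (0 : ℝ) 1 ×ˢ Icc (0 : ℝ) 1 | IsSaddlePointOn (Icc 0 1) (Icc 0 1)
        (fun p q ↦ toDual (payoff u11 u12 u21 u22 p q)) pq.1 pq.2} := by
  ext ⟨p, q⟩
  constructor
  · rintro ⟨hp, hq, hmax, hmin⟩
    exact ⟨⟨hp, hq⟩, (isSaddlePointOn_iff_forall_le hp hq).2 ⟨hmin, hmax⟩⟩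
  · rintro ⟨⟨hp, hq⟩, hsaddle⟩
    obtain ⟨hmin, hmax⟩ := (isSaddlePointOn_iff_forall_le hp hq).1 hsaddle
    exact ⟨hp, hq, hmax, hmin⟩

theorem convex_setOf_isNE : Convex ℝ {pq : ℝ × ℝ | IsNE u11 u12 u21 u22 pq.1 pq.2} := by
  rw [setOf_isNE_eq_setOf_isSaddlePointOn]
  exact convex_setOf_isSaddlePointOn
    (fun q _ ↦ (quasilinearOn_payoff_left u11 u12 u21 u22 (convex_Icc 0 1) q).dual.1)
    (fun p _ ↦ (quasilinearOn_payoff_right u11 u12 u21 u22 (convex_Icc 0 1) p).dual.2)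

end Payoff

theorem stmt3_general (u11 u12 u21 u22 p q : ℝ)
    (hcount : Set.Countable {pq : ℝ × ℝ | IsNE u11 u12 u21 u22 pq.1 pq.2})
    (hNE : IsNE u11 u12 u21 u22 p q) :
    {pq : ℝ × ℝ | IsNE u11 u12 u21 u22 pq.1 pq.2} = {(p, q)} := by
  have hsub : {pq : ℝ × ℝ | IsNE u11 u12 u21 u22 pq.1 pq.2}.Subsingleton :=
    hcount.isTotallyDisconnected _ Subset.rfl (convex_setOf_isNE u11 u12 u21 u22).isPreconnected
  exact hsub.eq_singleton_of_mem hNE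

theorem stmt3 (u11 u12 u21 u22 p q : ℝ)
    (hfin : Set.Finite {pq : ℝ × ℝ | IsNE u11 u12 u21 u22 pq.1 pq.2})
    (hNE : IsNE u11 u12 u21 u22 p q)
    (hp : p ∈ ({0, 1} : Set ℝ)) (hq : q ∈ ({0, 1} : Set ℝ)) :
    {pq : ℝ × ℝ | IsNE u11 u12 u21 u22 pq.1 pq.2} = {(p, q)} :=
  stmt3_general u11 u12 u21 u22 p q hfin.countable hNE
end

section
/- Consider a 2×2 zero-sum game with payoff matrix entries u11, u12, u21, u22, and let S ⊆ [0,1]×[0,1] be its set of Nash equilibria. Then S = {(p, q) ∈ [0,1]×[0,1] : p = 1} (i.e., the set of pairs with Player 1 playing its first action with probability 1 and Player 2 playing any mixed strategy) if and only if either (u11 = u12 and u21 = u22 and u11 > u21) or (u11 = u12 and u11 ≥ max{u21, u22} and max{u21, u22} > min{u21, u22}). Furthermore, in that case every (p*, q*) ∈ S satisfies u(p*, q*) = u11 = u12. -/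
/-!
The payoff is affine in `p` and in `q`, so a profile is an equilibrium as soon as no deviation to a
pure strategy pays. Testing this at `(1, 0)` and `(1, 1)` shows that all profiles `(1, q)` are
equilibria exactly when the first row is constant, `u11 = u12`, and dominates the second row.

In that case Player 1 secures `u11` by playing the first row. A strategy `p < 1` can then only be
part of an equilibrium if neither entry of the second row is below `u11`, since Player 2 would
answer with the smaller one. So `min u21 u22 < u11` rules out equilibria with `p < 1`; when it
fails, all four entries agree and every profile is an equilibrium. The two alternatives of the
theorem split the resulting criterion according to whether `u21 = u22`.
-/

theorem eq_and_lt_or_max_le_and_min_lt_max_iff {α : Type*} [LinearOrder α] {a b c : α} :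
    (b = c ∧ b < a ∨ max b c ≤ a ∧ min b c < max b c) ↔ max b c ≤ a ∧ min b c < a := by
  constructor
  · rintro (⟨rfl, hlt⟩ | ⟨hmax, hlt⟩)
    · rw [max_self, min_self]
      exact ⟨hlt.le, hlt⟩
    · exact ⟨hmax, hlt.trans_le hmax⟩
  · rintro ⟨hmax, hmin⟩
    by_cases h : b = c
    · exact .inl ⟨h, by simpa [h] using hmin⟩
    · exact .inr ⟨hmax, min_lt_max.mpr h⟩

section

variable {u11 u12 u21 u22 p q : ℝ}

theorem payoff_eq_mul_add_mul_left :
    payoff u11 u12 u21 u22 p q =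
      p * payoff u11 u12 u21 u22 1 q + (1 - p) * payoff u11 u12 u21 u22 0 q := by
  simp only [payoff]
  ring

theorem payoff_eq_mul_add_mul_right :
    payoff u11 u12 u21 u22 p q =
      q * payoff u11 u12 u21 u22 p 1 + (1 - q) * payoff u11 u12 u21 u22 p 0 := by
  simp only [payoff]
  ring

theorem payoff_zero_left : payoff u11 u12 u21 u22 0 q = q * u21 + (1 - q) * u22 := by
  simp only [payoff]
  ring

theorem payoff_one_left : payoff u11 u12 u21 u22 1 q = q * u11 + (1 - q) * u12 := by
  simp only [payoff]
  ring

theorem payoff_zero_right : payoff u11 u12 u21 u22 p 0 = p * u12 + (1 - p) * u22 := by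
  simp only [payoff]
  ring

theorem payoff_one_right : payoff u11 u12 u21 u22 p 1 = p * u11 + (1 - p) * u21 := by
  simp only [payoff]
  ring

theorem payoff_one_left_of_eq (h : u11 = u12) : payoff u11 u12 u21 u22 1 q = u11 := by
  rw [payoff_one_left, ← h]
  ring

theorem forall_payoff_le_iff {v : ℝ} :
    (∀ p ∈ Set.Icc (0 : ℝ) 1, payoff u11 u12 u21 u22 p q ≤ v) ↔
      payoff u11 u12 u21 u22 0 q ≤ v ∧ payoff u11 u12 u21 u22 1 q ≤ v := by
  refine ⟨fun h => ⟨h 0 (by simp), h 1 (by simp)⟩, fun ⟨h0, h1⟩ p ⟨hp0, hp1⟩ => ?_⟩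
  rw [payoff_eq_mul_add_mul_left]
  exact convex_Iic v h1 h0 hp0 (sub_nonneg.mpr hp1) (add_sub_cancel p 1)

theorem forall_le_payoff_iff {v : ℝ} :
    (∀ q ∈ Set.Icc (0 : ℝ) 1, v ≤ payoff u11 u12 u21 u22 p q) ↔
      v ≤ payoff u11 u12 u21 u22 p 0 ∧ v ≤ payoff u11 u12 u21 u22 p 1 := by
  refine ⟨fun h => ⟨h 0 (by simp), h 1 (by simp)⟩, fun ⟨h0, h1⟩ q ⟨hq0, hq1⟩ => ?_⟩
  rw [payoff_eq_mul_add_mul_right]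
  exact convex_Ici v h1 h0 hq0 (sub_nonneg.mpr hq1) (add_sub_cancel q 1)

theorem isNE_iff_pure_deviations :
    IsNE u11 u12 u21 u22 p q ↔
      p ∈ Set.Icc (0 : ℝ) 1 ∧ q ∈ Set.Icc (0 : ℝ) 1 ∧
        (payoff u11 u12 u21 u22 0 q ≤ payoff u11 u12 u21 u22 p q ∧
          payoff u11 u12 u21 u22 1 q ≤ payoff u11 u12 u21 u22 p q) ∧
        (payoff u11 u12 u21 u22 p q ≤ payoff u11 u12 u21 u22 p 0 ∧
          payoff u11 u12 u21 u22 p q ≤ payoff u11 u12 u21 u22 p 1) := by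
  rw [IsNE, forall_payoff_le_iff, forall_le_payoff_iff]

theorem isNE_one_left_iff :
    IsNE u11 u12 u21 u22 1 q ↔
      q ∈ Set.Icc (0 : ℝ) 1 ∧ q * u21 + (1 - q) * u22 ≤ q * u11 + (1 - q) * u12 ∧
        q * u11 + (1 - q) * u12 ≤ min u11 u12 := by
  simp [isNE_iff_pure_deviations, payoff_zero_left, payoff_one_left, and_comm]

theorem forall_isNE_one_left_iff :
    (∀ q ∈ Set.Icc (0 : ℝ) 1, IsNE u11 u12 u21 u22 1 q) ↔ u11 = u12 ∧ max u21 u22 ≤ u11 := by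
  constructor
  · intro h
    obtain ⟨-, h22, h12⟩ := isNE_one_left_iff.mp (h 0 (by simp))
    obtain ⟨-, h21, h11⟩ := isNE_one_left_iff.mp (h 1 (by simp))
    simp only [zero_mul, one_mul, sub_zero, sub_self, zero_add, add_zero, le_min_iff, le_refl,
      and_true, true_and] at h22 h12 h21 h11
    exact ⟨h11.antisymm h12, max_le h21 (h22.trans h12)⟩
  · rintro ⟨rfl, hmax⟩ q hq
    have row_one : q * u11 + (1 - q) * u11 = u11 := by ring
    rw [isNE_one_left_iff, row_one, min_self]
    obtain ⟨h21, h22⟩ := max_le_iff.mp hmax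
    exact ⟨hq, convex_Iic u11 h21 h22 hq.1 (sub_nonneg.mpr hq.2) (add_sub_cancel q 1), le_rfl⟩

theorem IsNE.eq_one_of_min_lt (hN : IsNE u11 u12 u21 u22 p q) (hrow : u11 = u12)
    (hmin : min u21 u22 < u11) : p = 1 := by
  subst hrow
  obtain ⟨⟨-, hp1⟩, -, ⟨-, secured⟩, reply0, reply1⟩ := isNE_iff_pure_deviations.mp hN
  rw [payoff_one_left_of_eq rfl] at secured
  rw [payoff_zero_right] at reply0
  rw [payoff_one_right] at reply1
  by_contra hp
  have hpos : 0 < 1 - p := sub_pos.mpr (lt_of_le_of_ne hp1 hp)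
  have le_of_le_mix {y : ℝ} (h : u11 ≤ p * u11 + (1 - p) * y) : u11 ≤ y :=
    le_of_mul_le_mul_left (by linarith) hpos
  have h21 : u11 ≤ u21 := le_of_le_mix (secured.trans reply1)
  have h22 : u11 ≤ u22 := le_of_le_mix (secured.trans reply0)
  exact hmin.not_ge (le_min h21 h22)

theorem isNE_of_const {c : ℝ} (hp : p ∈ Set.Icc (0 : ℝ) 1) (hq : q ∈ Set.Icc (0 : ℝ) 1) :
    IsNE c c c c p q := by
  have payoff_const (p q : ℝ) : payoff c c c c p q = c := by
    simp only [payoff]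
    ring
  simp [IsNE, payoff_const, hp.1, hp.2, hq.1, hq.2]

theorem setOf_isNE_eq_iff :
    {pq : ℝ × ℝ | IsNE u11 u12 u21 u22 pq.1 pq.2} =
        {pq : ℝ × ℝ | pq.1 = 1 ∧ pq.2 ∈ Set.Icc (0 : ℝ) 1} ↔
      u11 = u12 ∧ max u21 u22 ≤ u11 ∧ min u21 u22 < u11 := by
  constructor
  · intro hS
    have isNE_iff (p q : ℝ) : IsNE u11 u12 u21 u22 p q ↔ p = 1 ∧ q ∈ Set.Icc (0 : ℝ) 1 :=
      Set.ext_iff.mp hS (p, q)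
    obtain ⟨rfl, hmax⟩ := forall_isNE_one_left_iff.mp fun q hq => (isNE_iff 1 q).mpr ⟨rfl, hq⟩
    refine ⟨rfl, hmax, ?_⟩
    by_contra! hmin
    obtain ⟨h21, h22⟩ := max_le_iff.mp hmax
    obtain ⟨h21', h22'⟩ := le_min_iff.mp hmin
    obtain rfl := h21.antisymm h21'
    obtain rfl := h22.antisymm h22'
    exact zero_ne_one ((isNE_iff 0 0).mp (isNE_of_const (by simp) (by simp))).1
  · rintro ⟨hrow, hmax, hmin⟩
    ext ⟨p, q⟩
    constructor
    · exact fun hN => ⟨hN.eq_one_of_min_lt hrow hmin, hN.2.1⟩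
    · rintro ⟨rfl, hq⟩
      exact forall_isNE_one_left_iff.mpr ⟨hrow, hmax⟩ q hq

end

theorem stmt13 (u11 u12 u21 u22 : ℝ) :
    (({pq : ℝ × ℝ | IsNE u11 u12 u21 u22 pq.1 pq.2} =
        {pq : ℝ × ℝ | pq.1 = 1 ∧ pq.2 ∈ Set.Icc (0 : ℝ) 1}) ↔
      ((u11 = u12 ∧ u21 = u22 ∧ u11 > u21) ∨
      (u11 = u12 ∧ u11 ≥ max u21 u22 ∧ max u21 u22 > min u21 u22))) ∧
    (((u11 = u12 ∧ u21 = u22 ∧ u11 > u21) ∨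
      (u11 = u12 ∧ u11 ≥ max u21 u22 ∧ max u21 u22 > min u21 u22)) →
      ∀ p q : ℝ, IsNE u11 u12 u21 u22 p q →
        payoff u11 u12 u21 u22 p q = u11 ∧ payoff u11 u12 u21 u22 p q = u12) := by
  rw [← and_or_left, eq_and_lt_or_max_le_and_min_lt_max_iff]
  refine ⟨setOf_isNE_eq_iff, fun ⟨hrow, _, hmin⟩ p q hN => ?_⟩
  obtain rfl := hN.eq_one_of_min_lt hrow hmin
  have value : payoff u11 u12 u21 u22 1 q = u11 := payoff_one_left_of_eq hrow
  exact ⟨value, value.trans hrow⟩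
end

section
/- Consider a 2×2 zero-sum game with payoff matrix entries u11, u12, u21, u22 satisfying (u11 − u12)·(u22 − u21) > 0 and (u11 − u21)·(u22 − u12) > 0. Let δ = u11 − u12 − u21 + u22 and q* = (u22 − u12)/δ. Then for every q ∈ [0,1]: (1) if (q < q* and δ > 0) or (q > q* and δ ≤ 0), then û(q) = u21·q + u22·(1−q); (2) if (q > q* and δ > 0) or (q < q* and δ ≤ 0), then û(q) = u11·q + u12·(1−q); (3) if q = q*, then û(q) = (u11·u22 − u12·u21)/δ. Moreover, for all q1, q2 ∈ [0,1]: if 0 ≤ q1 < q2 ≤ q*, then û(q1) > û(q2), and if q* ≤ q1 < q2 ≤ 1, then û(q1) < û(q2). -/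
/-- `û q` : the largest payoff Player 1 can secure against strategy `q` of Player 2. -/
noncomputable def uhat (u11 u12 u21 u22 q : ℝ) : ℝ :=
  sSup ((fun p => payoff u11 u12 u21 u22 p q) '' Set.Icc (0 : ℝ) 1)

/-!
For fixed `q` the payoff is affine in `p`, so `û q` is the larger of the payoffs of the two rows
against `q`. These are affine in `q` and differ by `δ (q - q*)`, so the sign of `δ (q - q*)` decides
which row is optimal. As `u11 - u12` and `u22 - u21` have the same sign, the two rows have opposite
slopes, the decreasing one being optimal to the left of `q*` and the increasing one to the right.
-/

/-- The payoff of the action of Player 1 whose row of the matrix is `(a, b)` against the mixed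
strategy `q` of Player 2. -/
noncomputable def rowPayoff (a b q : ℝ) : ℝ :=
  a * q + b * (1 - q)

/-- Against `s`, both actions of Player 1 have the same payoff: the property that characterizes the
paper's `q*`, stated without dividing by `δ`. Any real `s` is allowed, in `[0, 1]` or not. -/
def MakesIndifferent (u11 u12 u21 u22 s : ℝ) : Prop :=
  rowPayoff u11 u12 s = rowPayoff u21 u22 s

theorem add_ne_zero_of_mul_pos {R : Type*} [Ring R] [LinearOrder R] [IsStrictOrderedRing R]
    {a b : R} (h : 0 < a * b) : a + b ≠ 0 := by
  intro hab
  rw [eq_neg_of_add_eq_zero_left hab, neg_mul, neg_pos] at h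
  exact h.not_ge (mul_self_nonneg b)

theorem rowPayoff_swap (a b q : ℝ) : rowPayoff b a (1 - q) = rowPayoff a b q := by
  unfold rowPayoff
  ring

theorem strictAnti_rowPayoff {a b : ℝ} (h : a < b) : StrictAnti (rowPayoff a b) := by
  intro x y hxy
  unfold rowPayoff
  linarith [mul_lt_mul_of_pos_left hxy (sub_pos.2 h)]

section Game

variable {u11 u12 u21 u22 s q : ℝ}

theorem payoff_eq_lineMap (u11 u12 u21 u22 p q : ℝ) :
    payoff u11 u12 u21 u22 p q =
      AffineMap.lineMap (rowPayoff u21 u22 q) (rowPayoff u11 u12 q) p := by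
  rw [AffineMap.lineMap_apply_ring, payoff, rowPayoff, rowPayoff]
  ring

theorem uhat_eq_max (u11 u12 u21 u22 q : ℝ) :
    uhat u11 u12 u21 u22 q = max (rowPayoff u11 u12 q) (rowPayoff u21 u22 q) := by
  simp only [uhat, payoff_eq_lineMap]
  rw [← segment_eq_image_lineMap, segment_eq_uIcc, Set.uIcc, csSup_Icc inf_le_sup, max_comm]

theorem uhat_swap_rows (u11 u12 u21 u22 : ℝ) :
    uhat u21 u22 u11 u12 = uhat u11 u12 u21 u22 := by
  funext q
  rw [uhat_eq_max, uhat_eq_max, max_comm]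

theorem uhat_swap_columns (u11 u12 u21 u22 q : ℝ) :
    uhat u12 u11 u22 u21 (1 - q) = uhat u11 u12 u21 u22 q := by
  rw [uhat_eq_max, uhat_eq_max, rowPayoff_swap, rowPayoff_swap]

theorem makesIndifferent_div (hδ : u11 - u12 - u21 + u22 ≠ 0) :
    MakesIndifferent u11 u12 u21 u22 ((u22 - u12) / (u11 - u12 - u21 + u22)) := by
  unfold MakesIndifferent rowPayoff
  linear_combination mul_div_cancel₀ (u22 - u12) hδ

namespace MakesIndifferent

theorem swap_rows (hs : MakesIndifferent u11 u12 u21 u22 s) :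
    MakesIndifferent u21 u22 u11 u12 s :=
  hs.symm

theorem swap_columns (hs : MakesIndifferent u11 u12 u21 u22 s) :
    MakesIndifferent u12 u11 u22 u21 (1 - s) := by
  rwa [MakesIndifferent, rowPayoff_swap, rowPayoff_swap]

theorem rowPayoff_sub_rowPayoff (hs : MakesIndifferent u11 u12 u21 u22 s) (q : ℝ) :
    rowPayoff u11 u12 q - rowPayoff u21 u22 q = (u11 - u12 - u21 + u22) * (q - s) := by
  unfold MakesIndifferent at hs
  unfold rowPayoff at hs ⊢
  linear_combination hs

theorem uhat_eq_rowPayoff_fst (hs : MakesIndifferent u11 u12 u21 u22 s)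
    (h : 0 ≤ (u11 - u12 - u21 + u22) * (q - s)) :
    uhat u11 u12 u21 u22 q = rowPayoff u11 u12 q := by
  rw [uhat_eq_max, max_eq_left]
  rwa [← sub_nonneg, hs.rowPayoff_sub_rowPayoff]

theorem uhat_eq_rowPayoff_snd (hs : MakesIndifferent u11 u12 u21 u22 s)
    (h : (u11 - u12 - u21 + u22) * (q - s) ≤ 0) :
    uhat u11 u12 u21 u22 q = rowPayoff u21 u22 q := by
  rw [uhat_eq_max, max_eq_right]
  rwa [← sub_nonpos, hs.rowPayoff_sub_rowPayoff]

theorem uhat_eq_div (hs : MakesIndifferent u11 u12 u21 u22 s)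
    (hδ : u11 - u12 - u21 + u22 ≠ 0) :
    uhat u11 u12 u21 u22 s = (u11 * u22 - u12 * u21) / (u11 - u12 - u21 + u22) := by
  rw [hs.uhat_eq_rowPayoff_fst (by rw [sub_self, mul_zero]), eq_div_iff hδ]
  unfold MakesIndifferent at hs
  unfold rowPayoff at hs ⊢
  linear_combination (u11 - u12) * hs

theorem strictAntiOn_uhat_Iic (hs : MakesIndifferent u11 u12 u21 u22 s)
    (h : 0 < (u11 - u12) * (u22 - u21)) :
    StrictAntiOn (uhat u11 u12 u21 u22) (Set.Iic s) := by
  wlog h₁ : 0 < u11 - u12 generalizing u11 u12 u21 u22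
  · rw [← uhat_swap_rows]
    have h₂ : u22 - u21 < 0 := neg_of_mul_pos_right h (not_lt.1 h₁)
    exact this hs.swap_rows (by linarith) (by linarith)
  have h₂ : 0 < u22 - u21 := (pos_iff_pos_of_mul_pos h).1 h₁
  have heq : Set.EqOn (rowPayoff u21 u22) (uhat u11 u12 u21 u22) (Set.Iic s) := fun q hq =>
    (hs.uhat_eq_rowPayoff_snd
      (mul_nonpos_of_nonneg_of_nonpos (by linarith) (sub_nonpos.2 hq))).symm
  exact ((strictAnti_rowPayoff (sub_pos.1 h₂)).strictAntiOn _).congr heq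

theorem strictMonoOn_uhat_Ici (hs : MakesIndifferent u11 u12 u21 u22 s)
    (h : 0 < (u11 - u12) * (u22 - u21)) :
    StrictMonoOn (uhat u11 u12 u21 u22) (Set.Ici s) := by
  have hanti : StrictAntiOn (uhat u12 u11 u22 u21) (Set.Iic (1 - s)) :=
    hs.swap_columns.strictAntiOn_uhat_Iic (by linarith)
  intro x hx y hy hxy
  rw [← uhat_swap_columns (q := x), ← uhat_swap_columns (q := y)]
  exact hanti (Set.mem_Iic.2 (sub_le_sub_left (Set.mem_Ici.1 hy) 1))
    (Set.mem_Iic.2 (sub_le_sub_left (Set.mem_Ici.1 hx) 1)) (sub_lt_sub_left hxy 1)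

end MakesIndifferent

end Game

theorem stmt18_general (u11 u12 u21 u22 δ qstar : ℝ)
    (h1 : (u11 - u12) * (u22 - u21) > 0)
    (hδ : δ = u11 - u12 - u21 + u22)
    (hq : qstar = (u22 - u12) / δ) :
    (∀ q : ℝ,
      (((q < qstar ∧ 0 < δ) ∨ (qstar < q ∧ δ ≤ 0)) →
        uhat u11 u12 u21 u22 q = u21 * q + u22 * (1 - q)) ∧
      (((qstar < q ∧ 0 < δ) ∨ (q < qstar ∧ δ ≤ 0)) →
        uhat u11 u12 u21 u22 q = u11 * q + u12 * (1 - q)) ∧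
      (q = qstar →
        uhat u11 u12 u21 u22 q = (u11 * u22 - u12 * u21) / δ)) ∧
    StrictAntiOn (uhat u11 u12 u21 u22) (Set.Iic qstar) ∧
    StrictMonoOn (uhat u11 u12 u21 u22) (Set.Ici qstar) := by
  have hδ0 : u11 - u12 - u21 + u22 ≠ 0 := by
    convert add_ne_zero_of_mul_pos h1 using 1
    ring
  have hs : MakesIndifferent u11 u12 u21 u22 qstar := by
    rw [hq, hδ]
    exact makesIndifferent_div hδ0
  subst hδ
  refine ⟨fun q => ⟨fun h => hs.uhat_eq_rowPayoff_snd ?_, fun h => hs.uhat_eq_rowPayoff_fst ?_,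
    fun h => h ▸ hs.uhat_eq_div hδ0⟩, hs.strictAntiOn_uhat_Iic h1, hs.strictMonoOn_uhat_Ici h1⟩
  · rcases h with ⟨hlt, hpos⟩ | ⟨hgt, hnonpos⟩
    · exact mul_nonpos_of_nonneg_of_nonpos hpos.le (sub_nonpos.2 hlt.le)
    · exact mul_nonpos_of_nonpos_of_nonneg hnonpos (sub_nonneg.2 hgt.le)
  · rcases h with ⟨hgt, hpos⟩ | ⟨hlt, hnonpos⟩
    · exact mul_nonneg hpos.le (sub_nonneg.2 hgt.le)
    · exact mul_nonneg_of_nonpos_of_nonpos hnonpos (sub_nonpos.2 hlt.le)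

theorem stmt18 (u11 u12 u21 u22 δ qstar : ℝ)
    (h1 : (u11 - u12) * (u22 - u21) > 0)
    (h2 : (u11 - u21) * (u22 - u12) > 0)
    (hδ : δ = u11 - u12 - u21 + u22)
    (hq : qstar = (u22 - u12) / δ) :
    (∀ q ∈ Set.Icc (0 : ℝ) 1,
      (((q < qstar ∧ 0 < δ) ∨ (qstar < q ∧ δ ≤ 0)) →
        uhat u11 u12 u21 u22 q = u21 * q + u22 * (1 - q)) ∧
      (((qstar < q ∧ 0 < δ) ∨ (q < qstar ∧ δ ≤ 0)) →
        uhat u11 u12 u21 u22 q = u11 * q + u12 * (1 - q)) ∧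
      (q = qstar →
        uhat u11 u12 u21 u22 q = (u11 * u22 - u12 * u21) / δ)) ∧
    (∀ q1 q2 : ℝ, 0 ≤ q1 → q1 < q2 → q2 ≤ qstar →
      uhat u11 u12 u21 u22 q2 < uhat u11 u12 u21 u22 q1) ∧
    (∀ q1 q2 : ℝ, qstar ≤ q1 → q1 < q2 → q2 ≤ 1 →
      uhat u11 u12 u21 u22 q1 < uhat u11 u12 u21 u22 q2) := by
  obtain ⟨hval, hanti, hmono⟩ := stmt18_general u11 u12 u21 u22 δ qstar h1 hδ hq
  exact ⟨fun q _ => hval q, fun q1 q2 _ h12 h2s => hanti (h12.le.trans h2s) h2s h12,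
    fun q1 q2 h1s h12 _ => hmono h1s (h1s.trans h12.le) h12⟩
end

section
/- Consider a 2×2 zero-sum game with payoff matrix entries u11, u12, u21, u22. If (p*, q*) ∈ [0,1]×[0,1] is a Nash equilibrium of the game, then the minimum over q ∈ [0,1] of û(q) exists and equals u(p*, q*); that is, û(q*) = u(p*, q*) and û(q) ≥ u(p*, q*) for all q ∈ [0,1]. -/
theorem continuous_payoff_left (u11 u12 u21 u22 q : ℝ) :
    Continuous fun p => payoff u11 u12 u21 u22 p q := by
  unfold payoff
  fun_prop

theorem bddAbove_image_payoff_Icc (u11 u12 u21 u22 a b q : ℝ) :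
    BddAbove ((fun p => payoff u11 u12 u21 u22 p q) '' Set.Icc a b) :=
  isCompact_Icc.bddAbove_image (continuous_payoff_left u11 u12 u21 u22 q).continuousOn

-- `IsSaddlePointOn` lists the minimizing player first, so the two strategies trade places.
theorem IsNE.isSaddlePointOn {u11 u12 u21 u22 p q : ℝ} (hNE : IsNE u11 u12 u21 u22 p q) :
    IsSaddlePointOn (Set.Icc 0 1) (Set.Icc 0 1) (fun q p => payoff u11 u12 u21 u22 p q) q p := by
  obtain ⟨-, -, p_best, q_best⟩ := hNE
  exact fun q' hq' p' hp' => (p_best p' hp').trans (q_best q' hq')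

theorem stmt19_general {E F α : Type*} [ConditionallyCompleteLattice α]
    {X : Set E} {Y : Set F} {f : E → F → α} {a : E} {b : F} (ha : a ∈ X) (hb : b ∈ Y)
    (h : IsSaddlePointOn X Y f a b) (hbdd : ∀ x ∈ X, BddAbove (f x '' Y)) :
    sSup (f a '' Y) = f a b ∧ ∀ x ∈ X, f a b ≤ sSup (f x '' Y) := by
  constructor
  · have hmax : IsGreatest (f a '' Y) (f a b) :=
      ⟨Set.mem_image_of_mem _ hb, Set.forall_mem_image.2 (h a ha)⟩
    exact hmax.csSup_eq
  · intro x hx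
    calc
      f a b ≤ f x b := h x hx b hb
      _ ≤ sSup (f x '' Y) := le_csSup (hbdd x hx) (Set.mem_image_of_mem _ hb)

theorem stmt19 (u11 u12 u21 u22 p q : ℝ)
    (hNE : IsNE u11 u12 u21 u22 p q) :
    uhat u11 u12 u21 u22 q = payoff u11 u12 u21 u22 p q ∧
    ∀ q' ∈ Set.Icc (0 : ℝ) 1,
      payoff u11 u12 u21 u22 p q ≤ uhat u11 u12 u21 u22 q' :=
  stmt19_general hNE.2.1 hNE.1 hNE.isSaddlePointOn
    fun q' _ => bddAbove_image_payoff_Icc u11 u12 u21 u22 0 1 q'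
end
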